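/- Let $D_i, D_j, D_k$ be three pairwise intersecting closed disks on the Riemann sphere with exterior intersection angles $\Theta_i, \Theta_j, \Theta_k \in [0,\pi)$ (where $\Theta_\mu$ is the angle for the pair not involving $D_\mu$). If $D_i \cap D_j \subset D_k$, then $\Theta_i + \Theta_j \ge \Theta_k + \pi$. -/

import Mathlib

open Real
open scoped RealInnerProductSpace

/-- The geodesic distance between two points of the unit sphere in `ℝ³`. -/
noncomputable def sphDist (x y : EuclideanSpace ℝ (Fin 3)) : ℝ :=
  Real.arccos ⟪x, y⟫

/-- The closed spherical disk with center `z` (a unit vector) and radius `r`. -/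
noncomputable def sphDisk (z : EuclideanSpace ℝ (Fin 3)) (r : ℝ) :
    Set (EuclideanSpace ℝ (Fin 3)) :=
  {x | x ∈ Metric.sphere (0 : EuclideanSpace ℝ (Fin 3)) 1 ∧ sphDist z x ≤ r}

/-!
Let `E × ℝ` carry the Minkowski form `⟪x, y⟫ - t * s`. Unit vectors `x` correspond to the null
directions `(x, 1)`, and the cap with center `z` and radius `r` is the set of null directions in
the half-space `0 ≤ ⟨v, ·⟩` of the spacelike unit vector `v = (sin r)⁻¹ • (z, cos r)`. Two such
vectors have product `-cos Θ`, where `Θ` is the exterior intersection angle.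

If `Dᵢ ∩ Dⱼ ⊆ Dₖ` then, on the future cone, `⟨vₖ, ·⟩` is nonnegative wherever `⟨vᵢ, ·⟩` and
`⟨vⱼ, ·⟩` are. Separation yields multipliers, not all zero, for which `l vᵢ + m vⱼ - n vₖ` lies in
the future cone, so its square is nonpositive. Let `A, B, C` be the interior angles `π - Θ` of the
pairs `jk`, `ki`, `ij`. For `n > 0` this contradicts `C < A + B`: replacing `A, B` by smaller
angles of sum `C` turns the square into the squared length of a planar vector. For `n = 0` the disks
`Dᵢ, Dⱼ` are externally tangent and `vᵢ + vⱼ` represents their common point (or they are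
complementary and `vᵢ + vⱼ = 0`); evaluating `⟨vₖ, ·⟩` there gives `0 ≤ cos A + cos B`.
-/

section Separation

theorem nonpos_of_forall_pos_mul_lt {a u : ℝ} (h : ∀ c > 0, c * a < u) : a ≤ 0 := by
  by_contra! ha
  have hu := h ((|u| + 1) / a) (by positivity)
  rw [div_mul_cancel₀ _ ha.ne'] at hu
  linarith [le_abs_self u]

theorem nonneg_of_forall_pos_mul_lt {a u : ℝ} (h : ∀ c > 0, c * a < u) : 0 ≤ u := by
  have hlim : Filter.Tendsto (fun c : ℝ => c * a) (nhdsWithin 0 (Set.Ioi 0)) (nhds 0) :=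
    tendsto_nhdsWithin_of_tendsto_nhds (Continuous.tendsto' (by fun_prop) _ _ (zero_mul a))
  exact le_of_tendsto hlim (by filter_upwards [self_mem_nhdsWithin] with c hc using (h c hc).le)

theorem exists_nonneg_dotProduct_nonpos {ι : Type*} [Fintype ι] {S : Set (ι → ℝ)}
    (hS : Convex ℝ S) (hne : S.Nonempty) (hpos : ∀ y ∈ S, ¬ ∀ i, 0 < y i) :
    ∃ w : ι → ℝ, 0 ≤ w ∧ w ≠ 0 ∧ ∀ y ∈ S, w ⬝ᵥ y ≤ 0 := by
  classical
  let P : Set (ι → ℝ) := Set.univ.pi fun _ => Set.Ioi 0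
  have hdisj : Disjoint P S :=
    Set.disjoint_left.2 fun y hyP hyS => hpos y hyS fun i => hyP i (Set.mem_univ i)
  obtain ⟨f, u, hfP, hfS⟩ := geometric_hahn_banach_open (convex_pi fun _ _ => convex_Ioi 0)
    (isOpen_set_pi Set.finite_univ fun _ _ => isOpen_Ioi) hS hdisj
  have hray : ∀ y ∈ P, ∀ c > 0, c * f y < u := fun y hy c hc => by
    simpa using hfP (c • y) fun i hi => mul_pos hc (hy i hi)
  have hone : (1 : ι → ℝ) ∈ P := fun _ _ => Set.mem_Ioi.2 one_pos
  have hu : 0 ≤ u := nonneg_of_forall_pos_mul_lt (hray 1 hone)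
  have hbasis (i : ι) : f (Pi.single i 1) ≤ 0 := by
    have hclosure : Pi.single i (1 : ℝ) ∈ closure P := by
      rw [closure_pi_set]
      intro j _
      have hnonneg : (0 : ι → ℝ) ≤ Pi.single i 1 := Pi.single_nonneg.2 zero_le_one
      simpa using hnonneg j
    exact closure_minimal (fun y hy => nonpos_of_forall_pos_mul_lt (hray y hy))
      (isClosed_le f.continuous continuous_const) hclosure
  have hdot (y : ι → ℝ) : (fun i => -f (Pi.single i 1)) ⬝ᵥ y = -f y := by
    conv_rhs => rw [pi_eq_sum_univ' y]
    simp [dotProduct, mul_comm]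
  refine ⟨fun i => -f (Pi.single i 1), fun i => neg_nonneg.2 (hbasis i), fun hzero => ?_, ?_⟩
  · have hf (y : ι → ℝ) : f y = 0 := by simpa [hzero] using (hdot y).symm
    obtain ⟨y, hy⟩ := hne
    linarith [hfS y hy, hfP 1 hone, hf y, hf 1]
  · intro y hy
    linarith [hdot y, hfS y hy]

theorem exists_multipliers_of_nonneg_imp {V : Type*} [AddCommGroup V] [Module ℝ V] {K : Set V}
    (hK : Convex ℝ K) (hne : K.Nonempty) {f g h : V →ₗ[ℝ] ℝ}
    (himp : ∀ v ∈ K, 0 ≤ f v → 0 ≤ g v → 0 ≤ h v) :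
    ∃ l m n : ℝ, 0 ≤ l ∧ 0 ≤ m ∧ 0 ≤ n ∧ ¬ (l = 0 ∧ m = 0 ∧ n = 0) ∧
      ∀ v ∈ K, l * f v + m * g v ≤ n * h v := by
  let F : V →ₗ[ℝ] (Fin 3 → ℝ) := LinearMap.pi ![f, g, -h]
  have hpos : ∀ y ∈ F '' K, ¬ ∀ i, 0 < y i := by
    rintro _ ⟨v, hv, rfl⟩ hFv
    have hf : 0 < f v := hFv 0
    have hg : 0 < g v := hFv 1
    have hh : 0 < -h v := hFv 2
    linarith [himp v hv hf.le hg.le]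
  obtain ⟨w, hw, hw0, hle⟩ :=
    exists_nonneg_dotProduct_nonpos (hK.linear_image F) (hne.image F) hpos
  refine ⟨w 0, w 1, w 2, hw 0, hw 1, hw 2, fun ⟨h0, h1, h2⟩ => hw0 ?_, fun v hv => ?_⟩
  · ext i
    fin_cases i <;> assumption
  · have hv := hle (F v) ⟨v, hv, rfl⟩
    have hsum : w ⬝ᵥ F v = w 0 * f v + w 1 * g v + w 2 * -h v := Fin.sum_univ_three _
    linarith

end Separation

section Trigonometry

theorem add_le_of_sq_add_cos_nonpos {A B C l m n : ℝ}
    (hA : A ∈ Set.Ioc 0 π) (hB : B ∈ Set.Ioc 0 π) (hC : 0 ≤ C)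
    (hl : 0 ≤ l) (hm : 0 ≤ m) (hn : 0 < n)
    (hQ : l ^ 2 + m ^ 2 + n ^ 2 + 2 * l * m * cos C - 2 * m * n * cos A - 2 * n * l * cos B ≤ 0) :
    A + B ≤ C := by
  by_contra! hlt
  obtain ⟨hA0, hAπ⟩ := hA
  obtain ⟨hB0, hBπ⟩ := hB
  have hAB : 0 < A + B := add_pos hA0 hB0
  set θ := C / (A + B)
  have hθ1 : θ < 1 := (div_lt_one hAB).2 hlt
  have hsum : θ * A + θ * B = C := by rw [← mul_add, div_mul_cancel₀ _ hAB.ne']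
  have hcosA : 0 < cos (θ * A) - cos A :=
    sub_pos.2 (cos_lt_cos_of_nonneg_of_le_pi (by positivity) hAπ (mul_lt_of_lt_one_left hA0 hθ1))
  have hcosB : 0 < cos (θ * B) - cos B :=
    sub_pos.2 (cos_lt_cos_of_nonneg_of_le_pi (by positivity) hBπ (mul_lt_of_lt_one_left hB0 hθ1))
  have hplanar : l ^ 2 + m ^ 2 + n ^ 2 + 2 * l * m * cos C
        - 2 * m * n * cos (θ * A) - 2 * n * l * cos (θ * B)
      = (n - l * cos (θ * B) - m * cos (θ * A)) ^ 2 + (l * sin (θ * B) - m * sin (θ * A)) ^ 2 := by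
    rw [← hsum, cos_add]
    linear_combination
      -l ^ 2 * sin_sq_add_cos_sq (θ * B) - m ^ 2 * sin_sq_add_cos_sq (θ * A)
  have hdefect : n * (m * (cos (θ * A) - cos A) + l * (cos (θ * B) - cos B)) ≤ 0 := by
    linarith [sq_nonneg (n - l * cos (θ * B) - m * cos (θ * A)),
      sq_nonneg (l * sin (θ * B) - m * sin (θ * A))]
  have hdefect' := nonpos_of_mul_nonpos_right hdefect hn
  have hl0 : l = 0 := by nlinarith
  have hm0 : m = 0 := by nlinarith
  subst hl0 hm0
  nlinarith

theorem eq_and_eq_neg_one_of_sq_add_nonpos {l m c : ℝ} (hl : 0 ≤ l) (hm : 0 ≤ m)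
    (hlm : ¬ (l = 0 ∧ m = 0)) (hc : -1 ≤ c) (hQ : l ^ 2 + m ^ 2 + 2 * l * m * c ≤ 0) :
    l = m ∧ c = -1 := by
  have hcross : 0 ≤ l * m * (c + 1) := mul_nonneg (mul_nonneg hl hm) (by linarith)
  have heq : l = m := by
    have hsq : (l - m) ^ 2 = 0 := le_antisymm (by linarith) (sq_nonneg _)
    exact sub_eq_zero.1 (pow_eq_zero_iff two_ne_zero |>.1 hsq)
  subst heq
  have hl0 : 0 < l := lt_of_le_of_ne hl fun h => hlm ⟨h.symm, h.symm⟩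
  exact ⟨rfl, by nlinarith [mul_pos hl0 hl0]⟩

theorem add_le_pi_of_cos_add_cos_nonneg {A B : ℝ} (hA : A ≤ π) (hB : B ≤ π)
    (h : 0 ≤ cos A + cos B) : A + B ≤ π := by
  by_contra! hlt
  have := cos_lt_cos_of_nonneg_of_le_pi (sub_nonneg.2 hA) hB (by linarith)
  rw [cos_pi_sub] at this
  linarith

end Trigonometry

theorem exists_nonneg_norm_add_smul_eq {F : Type*} [NormedAddCommGroup F] [NormedSpace ℝ F]
    {x d : F} {t : ℝ} (hx : ‖x‖ ≤ t) (hd : d ≠ 0) : ∃ s : ℝ, 0 ≤ s ∧ ‖x + s • d‖ = t := by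
  have hd0 : 0 < ‖d‖ := norm_pos_iff.2 hd
  have ht : 0 ≤ t := (norm_nonneg x).trans hx
  set S : ℝ := (t + ‖x‖) / ‖d‖
  have hS : 0 ≤ S := by positivity
  have hfar : t ≤ ‖x + S • d‖ := by
    have hnorm : ‖S • d‖ = t + ‖x‖ := by
      rw [norm_smul, Real.norm_of_nonneg hS, div_mul_cancel₀ _ hd0.ne']
    linarith [norm_sub_le (x + S • d) x, congrArg norm (add_sub_cancel_left x (S • d))]
  have hcont : ContinuousOn (fun s : ℝ => ‖x + s • d‖) (Set.Icc 0 S) := by fun_prop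
  obtain ⟨s, hs, hst⟩ := intermediate_value_Icc hS hcont ⟨by simpa using hx, hfar⟩
  exact ⟨s, hs.1, hst⟩

section Minkowski

variable {E : Type*} [NormedAddCommGroup E] [InnerProductSpace ℝ E]

theorem exists_ne_zero_inner_eq_zero (hE : 2 < Module.rank ℝ E) (a b : E) :
    ∃ d : E, d ≠ 0 ∧ ⟪a, d⟫ = 0 ∧ ⟪b, d⟫ = 0 := by
  let S : Submodule ℝ E := Submodule.span ℝ {a, b}
  have : FiniteDimensional ℝ S := FiniteDimensional.span_of_finite ℝ (by simp)
  have hS : S ≠ ⊤ := by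
    intro htop
    have hrank : Module.rank ℝ S ≤ 2 := (rank_span_le _).trans (Cardinal.mk_insert_le.trans
      (by rw [Cardinal.mk_singleton, one_add_one_eq_two]))
    rw [htop, rank_top] at hrank
    exact hrank.not_gt hE
  obtain ⟨d, hd, hd0⟩ :=
    (Submodule.ne_bot_iff _).1 (mt Submodule.orthogonal_eq_bot_iff.1 hS)
  have horth := (Submodule.mem_orthogonal S d).1 hd
  exact ⟨d, hd0, horth a (Submodule.subset_span (by simp)),
    horth b (Submodule.subset_span (by simp))⟩

/-- The Lorentzian form `⟪x, y⟫ - t * s` on the Minkowski space `E × ℝ`, with time as the second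
coordinate. -/
noncomputable def minkowskiForm : LinearMap.BilinForm ℝ (E × ℝ) :=
  (innerₗ E).compl₁₂ (LinearMap.fst ℝ E ℝ) (LinearMap.fst ℝ E ℝ)
    - (LinearMap.mul ℝ ℝ).compl₁₂ (LinearMap.snd ℝ E ℝ) (LinearMap.snd ℝ E ℝ)

theorem minkowskiForm_apply (v w : E × ℝ) : minkowskiForm v w = ⟪v.1, w.1⟫ - v.2 * w.2 := by
  simp [minkowskiForm]

theorem minkowskiForm_comm (v w : E × ℝ) : minkowskiForm v w = minkowskiForm w v := by
  simp [minkowskiForm_apply, real_inner_comm, mul_comm]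

variable (E) in
/-- The closed cone of future-directed causal vectors of `E × ℝ`, including `0`. -/
def futureCone : Set (E × ℝ) := {v | ‖v.1‖ ≤ v.2}

theorem convex_futureCone : Convex ℝ (futureCone E) := by
  simpa [futureCone] using (convexOn_univ_norm (E := E)).convex_epigraph

theorem minkowskiForm_self_nonpos {v : E × ℝ} (hv : v ∈ futureCone E) :
    minkowskiForm v v ≤ 0 := by
  rw [minkowskiForm_apply, real_inner_self_eq_norm_sq, ← sq]
  exact sub_nonpos.2 (pow_le_pow_left₀ (norm_nonneg _) hv 2)

theorem mem_futureCone_of_minkowskiForm_nonpos {v : E × ℝ}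
    (hv : ∀ w ∈ futureCone E, minkowskiForm v w ≤ 0) : v ∈ futureCone E := by
  change ‖v.1‖ ≤ v.2
  rcases (norm_nonneg v.1).eq_or_lt with h0 | hpos
  · have htime := hv (0, 1) (by simp [futureCone])
    simp only [minkowskiForm_apply, inner_zero_right, mul_one] at htime
    linarith
  · have hnull := hv (v.1, ‖v.1‖) (by simp [futureCone])
    rw [minkowskiForm_apply, real_inner_self_eq_norm_sq] at hnull
    nlinarith

theorem exists_null_minkowskiForm_eq (hE : 2 < Module.rank ℝ E) (a b c : E × ℝ) {v : E × ℝ}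
    (hv : v ∈ futureCone E) :
    ∃ w : E × ℝ, ‖w.1‖ = w.2 ∧ minkowskiForm a w = minkowskiForm a v ∧
      minkowskiForm b w = minkowskiForm b v ∧ minkowskiForm c w ≤ minkowskiForm c v := by
  obtain ⟨d, hd0, had, hbd, hcd⟩ :
      ∃ d : E, d ≠ 0 ∧ ⟪a.1, d⟫ = 0 ∧ ⟪b.1, d⟫ = 0 ∧ ⟪c.1, d⟫ ≤ 0 := by
    obtain ⟨d, hd0, had, hbd⟩ := exists_ne_zero_inner_eq_zero hE a.1 b.1
    rcases le_total ⟪c.1, d⟫ 0 with hcd | hcd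
    · exact ⟨d, hd0, had, hbd, hcd⟩
    · exact ⟨-d, neg_ne_zero.2 hd0, by simp [had], by simp [hbd], by simpa using hcd⟩
  obtain ⟨s, hs, hnorm⟩ := exists_nonneg_norm_add_smul_eq hv hd0
  refine ⟨(v.1 + s • d, v.2), hnorm, ?_, ?_, ?_⟩
  · simp [minkowskiForm_apply, inner_add_right, real_inner_smul_right, had]
  · simp [minkowskiForm_apply, inner_add_right, real_inner_smul_right, hbd]
  · simpa [minkowskiForm_apply, inner_add_right, real_inner_smul_right] using
      mul_nonpos_of_nonneg_of_nonpos hs hcd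

theorem minkowskiForm_nonneg_of_forall_sphere (hE : 2 < Module.rank ℝ E) {a b c : E × ℝ}
    (himp : ∀ x ∈ Metric.sphere (0 : E) 1, 0 ≤ minkowskiForm a (x, 1) →
      0 ≤ minkowskiForm b (x, 1) → 0 ≤ minkowskiForm c (x, 1))
    {v : E × ℝ} (hv : v ∈ futureCone E) (ha : 0 ≤ minkowskiForm a v)
    (hb : 0 ≤ minkowskiForm b v) : 0 ≤ minkowskiForm c v := by
  obtain ⟨⟨x, t⟩, hnull, hax, hbx, hcx⟩ := exists_null_minkowskiForm_eq hE a b c hv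
  refine le_trans ?_ hcx
  rw [← hax] at ha
  rw [← hbx] at hb
  have ht : 0 ≤ t := (norm_nonneg x).trans_eq hnull
  obtain rfl | ht := ht.eq_or_lt
  · obtain rfl : x = 0 := norm_eq_zero.1 hnull
    simp [minkowskiForm_apply]
  have hscale : ((x, t) : E × ℝ) = t • (t⁻¹ • x, 1) := by simp [ht.ne']
  have hsphere : t⁻¹ • x ∈ Metric.sphere (0 : E) 1 := by
    simp [norm_smul, hnull, abs_of_pos ht, ht.ne']
  rw [hscale, map_smul, smul_eq_mul, mul_nonneg_iff_of_pos_left ht] at ha hb ⊢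
  exact himp _ hsphere ha hb

theorem exists_multipliers_mem_futureCone {a b c : E × ℝ}
    (himp : ∀ v ∈ futureCone E, 0 ≤ minkowskiForm a v → 0 ≤ minkowskiForm b v →
      0 ≤ minkowskiForm c v) :
    ∃ l m n : ℝ, 0 ≤ l ∧ 0 ≤ m ∧ 0 ≤ n ∧ ¬ (l = 0 ∧ m = 0 ∧ n = 0) ∧
      l • a + m • b - n • c ∈ futureCone E := by
  obtain ⟨l, m, n, hl, hm, hn, hlmn, hle⟩ :=
    exists_multipliers_of_nonneg_imp convex_futureCone ⟨0, by simp [futureCone]⟩ himp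
  refine ⟨l, m, n, hl, hm, hn, hlmn, mem_futureCone_of_minkowskiForm_nonpos fun v hv => ?_⟩
  simpa only [map_sub, map_add, map_smul, LinearMap.sub_apply, LinearMap.add_apply,
    LinearMap.smul_apply, smul_eq_mul, sub_nonpos] using hle v hv

theorem add_le_of_minkowskiForm_eq_cos {a b c : E × ℝ} {A B C : ℝ}
    (ha : minkowskiForm a a = 1) (hb : minkowskiForm b b = 1) (hc : minkowskiForm c c = 1)
    (hab : minkowskiForm a b = cos C) (hbc : minkowskiForm b c = cos A)
    (hca : minkowskiForm c a = cos B)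
    (hA : A ∈ Set.Ioc 0 π) (hB : B ∈ Set.Ioc 0 π) (hC : C ∈ Set.Icc 0 π)
    (himp : ∀ v ∈ futureCone E, 0 ≤ minkowskiForm a v → 0 ≤ minkowskiForm b v →
      0 ≤ minkowskiForm c v) :
    A + B ≤ C := by
  obtain ⟨l, m, n, hl, hm, hn, hlmn, hfuture⟩ := exists_multipliers_mem_futureCone himp
  have hba := (minkowskiForm_comm b a).trans hab
  have hcb := (minkowskiForm_comm c b).trans hbc
  have hac := (minkowskiForm_comm a c).trans hca
  have hQ : l ^ 2 + m ^ 2 + n ^ 2 + 2 * l * m * cos C - 2 * m * n * cos A - 2 * n * l * cos B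
      ≤ 0 := by
    have hself := minkowskiForm_self_nonpos hfuture
    simp only [map_sub, map_add, map_smul, LinearMap.sub_apply, LinearMap.add_apply,
      LinearMap.smul_apply, smul_eq_mul, ha, hb, hc, hab, hba, hbc, hcb, hca, hac] at hself
    linarith
  obtain rfl | hn := hn.eq_or_lt
  · obtain ⟨rfl, hcosC⟩ : l = m ∧ cos C = -1 :=
      eq_and_eq_neg_one_of_sq_add_nonpos hl hm (by simpa using hlmn) (neg_one_le_cos C)
        (by simpa using hQ)
    have hl0 : 0 < l := lt_of_le_of_ne hl fun h => hlmn ⟨h.symm, h.symm, rfl⟩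
    have hCπ : C = π := injOn_cos hC ⟨pi_pos.le, le_rfl⟩ (hcosC.trans cos_pi.symm)
    have htangent := himp _ hfuture (by simp [ha, hab, hcosC])
      (by simp [hb, hba, hcosC])
    have hcos : 0 ≤ cos A + cos B := by
      simp only [zero_smul, sub_zero, map_add, map_smul, smul_eq_mul, hca, hcb] at htangent
      nlinarith
    exact hCπ ▸ add_le_pi_of_cos_add_cos_nonneg hA.2 hB.2 hcos
  · exact add_le_of_sq_add_cos_nonpos hA hB hC.1 hl hm hn hQ

end Minkowski

section SphericalCap

variable {E : Type*} [NormedAddCommGroup E] [InnerProductSpace ℝ E]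

/-- The closed cap with center `z` and angular radius `r` on the unit sphere of `E`. -/
def sphericalCap (z : E) (r : ℝ) : Set E :=
  {x ∈ Metric.sphere (0 : E) 1 | InnerProductGeometry.angle z x ≤ r}

/-- The spacelike unit vector of `E × ℝ` whose nonnegative half-space cuts out the cap with center
`z` and radius `r` among the null directions `(x, 1)`. -/
noncomputable def capNormal (z : E) (r : ℝ) : E × ℝ := (sin r)⁻¹ • (z, cos r)

theorem mem_sphericalCap_iff {z x : E} {r : ℝ} (hz : z ∈ Metric.sphere (0 : E) 1)
    (hr : r ∈ Set.Ioo 0 π) (hx : x ∈ Metric.sphere (0 : E) 1) :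
    x ∈ sphericalCap z r ↔ 0 ≤ minkowskiForm (capNormal z r) (x, 1) := by
  have hform : minkowskiForm (capNormal z r) (x, 1) = (sin r)⁻¹ * (⟪z, x⟫ - cos r) := by
    simp [minkowskiForm_apply, capNormal, real_inner_smul_left, mul_sub]
  have hcos : cos (InnerProductGeometry.angle z x) = ⟪z, x⟫ := by
    simp [InnerProductGeometry.cos_angle, mem_sphere_zero_iff_norm.1 hz,
      mem_sphere_zero_iff_norm.1 hx]
  rw [hform, mul_nonneg_iff_of_pos_left (inv_pos.2 (sin_pos_of_mem_Ioo hr)), sub_nonneg, ← hcos,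
    strictAntiOn_cos.le_iff_ge ⟨hr.1.le, hr.2.le⟩
      ⟨InnerProductGeometry.angle_nonneg z x, InnerProductGeometry.angle_le_pi z x⟩]
  exact and_iff_right hx

theorem minkowskiForm_capNormal_self {z : E} {r : ℝ} (hz : z ∈ Metric.sphere (0 : E) 1)
    (hr : sin r ≠ 0) : minkowskiForm (capNormal z r) (capNormal z r) = 1 := by
  simp only [capNormal, map_smul, LinearMap.smul_apply, smul_eq_mul, minkowskiForm_apply,
    real_inner_self_eq_norm_sq, mem_sphere_zero_iff_norm.1 hz]
  field_simp
  linear_combination -sin_sq_add_cos_sq r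

theorem minkowskiForm_capNormal {z w : E} {r s Θ : ℝ} (hz : z ∈ Metric.sphere (0 : E) 1)
    (hw : w ∈ Metric.sphere (0 : E) 1) (hr : sin r ≠ 0) (hs : sin s ≠ 0)
    (hΘ : cos (InnerProductGeometry.angle z w) = cos r * cos s - cos Θ * sin r * sin s) :
    minkowskiForm (capNormal z r) (capNormal w s) = cos (π - Θ) := by
  rw [InnerProductGeometry.cos_angle, mem_sphere_zero_iff_norm.1 hz,
    mem_sphere_zero_iff_norm.1 hw, mul_one, div_one] at hΘ
  simp only [capNormal, map_smul, LinearMap.smul_apply, smul_eq_mul, minkowskiForm_apply, hΘ,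
    cos_pi_sub]
  field_simp
  ring

theorem angle_relation_of_inter_subset_general (hE : 2 < Module.rank ℝ E) {zi zj zk : E}
    (hzi : zi ∈ Metric.sphere (0 : E) 1) (hzj : zj ∈ Metric.sphere (0 : E) 1)
    (hzk : zk ∈ Metric.sphere (0 : E) 1) {ri rj rk Θi Θj Θk : ℝ}
    (hri : ri ∈ Set.Ioo 0 π) (hrj : rj ∈ Set.Ioo 0 π) (hrk : rk ∈ Set.Ioo 0 π)
    (hΘi : Θi ∈ Set.Ico 0 π) (hΘj : Θj ∈ Set.Ico 0 π) (hΘk : Θk ∈ Set.Icc 0 π)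
    (hij : cos (InnerProductGeometry.angle zi zj) = cos ri * cos rj - cos Θk * sin ri * sin rj)
    (hjk : cos (InnerProductGeometry.angle zj zk) = cos rj * cos rk - cos Θi * sin rj * sin rk)
    (hki : cos (InnerProductGeometry.angle zk zi) = cos rk * cos ri - cos Θj * sin rk * sin ri)
    (hsub : sphericalCap zi ri ∩ sphericalCap zj rj ⊆ sphericalCap zk rk) :
    Θk + π ≤ Θi + Θj := by
  have hsi := (sin_pos_of_mem_Ioo hri).ne'
  have hsj := (sin_pos_of_mem_Ioo hrj).ne'
  have hsk := (sin_pos_of_mem_Ioo hrk).ne'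
  have hinterior : (π - Θi) + (π - Θj) ≤ π - Θk :=
    add_le_of_minkowskiForm_eq_cos (minkowskiForm_capNormal_self hzi hsi)
      (minkowskiForm_capNormal_self hzj hsj) (minkowskiForm_capNormal_self hzk hsk)
      (minkowskiForm_capNormal hzi hzj hsi hsj hij) (minkowskiForm_capNormal hzj hzk hsj hsk hjk)
      (minkowskiForm_capNormal hzk hzi hsk hsi hki)
      ⟨sub_pos.2 hΘi.2, sub_le_self π hΘi.1⟩ ⟨sub_pos.2 hΘj.2, sub_le_self π hΘj.1⟩
      ⟨sub_nonneg.2 hΘk.2, sub_le_self π hΘk.1⟩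
      fun _ => minkowskiForm_nonneg_of_forall_sphere hE fun x hx hxi hxj =>
        (mem_sphericalCap_iff hzk hrk hx).1
          (hsub ⟨(mem_sphericalCap_iff hzi hri hx).2 hxi, (mem_sphericalCap_iff hzj hrj hx).2 hxj⟩)
  linarith

end SphericalCap

theorem sphDist_eq_angle {x y : EuclideanSpace ℝ (Fin 3)}
    (hx : x ∈ Metric.sphere (0 : EuclideanSpace ℝ (Fin 3)) 1)
    (hy : y ∈ Metric.sphere (0 : EuclideanSpace ℝ (Fin 3)) 1) :
    sphDist x y = InnerProductGeometry.angle x y := by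
  simp [sphDist, InnerProductGeometry.angle, mem_sphere_zero_iff_norm.1 hx,
    mem_sphere_zero_iff_norm.1 hy]

theorem sphDisk_eq_sphericalCap {z : EuclideanSpace ℝ (Fin 3)} (r : ℝ)
    (hz : z ∈ Metric.sphere (0 : EuclideanSpace ℝ (Fin 3)) 1) :
    sphDisk z r = sphericalCap z r := by
  ext x
  exact and_congr_right fun hx => by rw [sphDist_eq_angle hz hx]

/-- Lemma 2.6 (first part): if three pairwise intersecting disks on the sphere have
exterior intersection angles `Θ_i, Θ_j, Θ_k ∈ [0,π)` and `D_i ∩ D_j ⊆ D_k`, then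
`Θ_i + Θ_j ≥ Θ_k + π`. -/
theorem angle_relation_of_inter_subset
    (zi zj zk : EuclideanSpace ℝ (Fin 3))
    (hzi : zi ∈ Metric.sphere (0 : EuclideanSpace ℝ (Fin 3)) 1)
    (hzj : zj ∈ Metric.sphere (0 : EuclideanSpace ℝ (Fin 3)) 1)
    (hzk : zk ∈ Metric.sphere (0 : EuclideanSpace ℝ (Fin 3)) 1)
    (ri rj rk Θi Θj Θk : ℝ)
    (hri : ri ∈ Set.Ioo 0 π) (hrj : rj ∈ Set.Ioo 0 π) (hrk : rk ∈ Set.Ioo 0 π)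
    (hΘi : Θi ∈ Set.Ico 0 π) (hΘj : Θj ∈ Set.Ico 0 π) (hΘk : Θk ∈ Set.Ico 0 π)
    -- exterior intersection angles: `Θ_k` for the pair `(D_i, D_j)`, etc.
    (hij : cos (sphDist zi zj) = cos ri * cos rj - cos Θk * sin ri * sin rj)
    (hjk : cos (sphDist zj zk) = cos rj * cos rk - cos Θi * sin rj * sin rk)
    (hki : cos (sphDist zk zi) = cos rk * cos ri - cos Θj * sin rk * sin ri)
    -- the disks pairwise intersect
    (hmij : (sphDisk zi ri ∩ sphDisk zj rj).Nonempty)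
    (hmjk : (sphDisk zj rj ∩ sphDisk zk rk).Nonempty)
    (hmki : (sphDisk zk rk ∩ sphDisk zi ri).Nonempty)
    (hsub : sphDisk zi ri ∩ sphDisk zj rj ⊆ sphDisk zk rk) :
    Θi + Θj ≥ Θk + π := by
  rw [sphDist_eq_angle hzi hzj] at hij
  rw [sphDist_eq_angle hzj hzk] at hjk
  rw [sphDist_eq_angle hzk hzi] at hki
  rw [sphDisk_eq_sphericalCap ri hzi, sphDisk_eq_sphericalCap rj hzj,
    sphDisk_eq_sphericalCap rk hzk] at hsub
  exact angle_relation_of_inter_subset_general (Module.lt_rank_of_lt_finrank (by simp))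
    hzi hzj hzk hri hrj hrk hΘi hΘj (Set.Ico_subset_Icc_self hΘk) hij hjk hki hsub
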